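/- Let X₁, X₂, X₃ be independent uniformly distributed random points on [0,1] with the Euclidean distance |x−y|. Fix 1/2 < r₀ < 1. Then: (i) the probability that all three pairwise distances are less than r₀ equals 3r₀² − 2r₀³; (ii) the probability that |X₁−X₂| < r₀ and |X₁−X₃| < r₀ but |X₂−X₃| > r₀ equals (4/3)r₀³ − (1/3)(3r₀−1)²; (iii) the probability that |X₁−X₂| < r₀ but |X₁−X₃| > r₀ and |X₂−X₃| > r₀ equals (2/3)(1−r₀)³; (iv) the probability that all three pairwise distances exceed r₀ equals 0. -/

import Mathlib

open MeasureTheory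

/-- The unit cube `[0,1]³` as a subset of `ℝ × ℝ × ℝ`:
the law of three i.i.d. uniform points on `[0,1]` is Lebesgue measure on this cube. -/
def unitCube3 : Set (ℝ × ℝ × ℝ) :=
  Set.Icc (0:ℝ) 1 ×ˢ Set.Icc (0:ℝ) 1 ×ˢ Set.Icc (0:ℝ) 1

lemma meas_and {α : Type*} [MeasurableSpace α] {p q : α → Prop} (hp : MeasurableSet {x | p x})
    (hq : MeasurableSet {x | q x}) : MeasurableSet {x | p x ∧ q x} := hp.inter hq

lemma vol_sandwich (a b : ℝ) (T : Set ℝ) (h1 : Set.Ioo a b ⊆ T) (h2 : T ⊆ Set.Icc a b) :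
    volume T = ENNReal.ofReal (b - a) := by
  apply le_antisymm
  · exact (measure_mono h2).trans (by rw [Real.volume_Icc])
  · exact le_trans (by rw [Real.volume_Ioo]) (measure_mono h1)

lemma vol_slices {β : Type*} [MeasureSpace β] [SFinite (volume : Measure β)]
    (S : Set (ℝ × β)) (hS : MeasurableSet S) (a b : ℝ) (hab : a ≤ b) (f : ℝ → ℝ)
    (hf : Continuous f) (hf0 : ∀ x ∈ Set.Ioo a b, 0 ≤ f x)
    (hs : ∀ x ∈ Set.Ioo a b, volume (Prod.mk x ⁻¹' S) = ENNReal.ofReal (f x))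
    (hout : ∀ x, x ∉ Set.Icc a b → Prod.mk x ⁻¹' S = ∅) :
    volume S = ENNReal.ofReal (∫ x in a..b, f x) := by
  rw [Measure.volume_eq_prod, Measure.prod_apply hS]
  have e1 : ∫⁻ x, volume (Prod.mk x ⁻¹' S) = ∫⁻ x in Set.Icc a b, volume (Prod.mk x ⁻¹' S) := by
    rw [setLIntegral_eq_of_support_subset]
    intro x hx
    by_contra h
    apply hx
    simp [hout x h]
  rw [e1, setLIntegral_congr Ioo_ae_eq_Icc.symm, setLIntegral_congr_fun measurableSet_Ioo hs,
    intervalIntegral.integral_of_le hab, integral_Ioc_eq_integral_Ioo,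
    ofReal_integral_eq_lintegral_ofReal]
  · exact (hf.integrableOn_Icc).mono_set Set.Ioo_subset_Icc_self
  · exact (ae_restrict_iff' measurableSet_Ioo).2 (Filter.Eventually.of_forall hf0)

lemma int_quad (a b c d e : ℝ) : ∫ x in a..b, (c * x ^ 2 + d * x + e) =
    c * (b ^ 3 - a ^ 3) / 3 + d * (b ^ 2 - a ^ 2) / 2 + e * (b - a) := by
  rw [intervalIntegral.integral_add (by apply Continuous.intervalIntegrable; fun_prop)
    (by apply Continuous.intervalIntegrable; fun_prop),
    intervalIntegral.integral_add (by apply Continuous.intervalIntegrable; fun_prop)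
    (by apply Continuous.intervalIntegrable; fun_prop)]
  rw [intervalIntegral.integral_const_mul, integral_pow, intervalIntegral.integral_const_mul,
    integral_id, intervalIntegral.integral_const, smul_eq_mul]
  norm_num
  ring

lemma int_quad_congr (f : ℝ → ℝ) (a b c d e : ℝ) (hab : a ≤ b)
    (h : ∀ x, a ≤ x → x ≤ b → f x = c * x ^ 2 + d * x + e) : ∫ x in a..b, f x =
    c * (b ^ 3 - a ^ 3) / 3 + d * (b ^ 2 - a ^ 2) / 2 + e * (b - a) := by
  rw [← int_quad]
  apply intervalIntegral.integral_congr
  intro x hx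
  rw [Set.uIcc_of_le hab] at hx
  exact h x hx.1 hx.2

lemma int_split (f : ℝ → ℝ) (hf : Continuous f) (a b c d : ℝ) :
    ∫ x in a..d, f x = (∫ x in a..b, f x) + (∫ x in b..c, f x) + ∫ x in c..d, f x := by
  rw [intervalIntegral.integral_add_adjacent_intervals (hf.intervalIntegrable _ _)
    (hf.intervalIntegrable _ _), intervalIntegral.integral_add_adjacent_intervals
    (hf.intervalIntegrable _ _) (hf.intervalIntegrable _ _)]

lemma area_lt (r a b : ℝ) (J : Set ℝ) (hJ : MeasurableSet J) (h1 : Set.Ioo a b ⊆ J)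
    (h2 : J ⊆ Set.Icc a b) (hr : r ≤ b - a) (hr2 : b - a ≤ 2 * r) :
    volume {p : ℝ × ℝ | p.1 ∈ J ∧ p.2 ∈ J ∧ |p.1 - p.2| < r}
      = ENNReal.ofReal (2 * r * (b - a) - r ^ 2) := by
  have hc : Continuous (fun y : ℝ => min b (y + r) - max a (y - r)) := by fun_prop
  rw [vol_slices _ _ a b (by linarith) (fun y => min b (y + r) - max a (y - r)) hc]
  · congr 1
    rw [int_split _ hc a (b - r) (a + r) b, int_quad_congr _ a (b-r) 0 1 (r-a),
      int_quad_congr _ (b-r) (a+r) 0 0 (b-a), int_quad_congr _ (a+r) b 0 (-1) (b+r)]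
    · ring
    · linarith
    · intro x _ _
      rw [min_eq_left (by linarith), max_eq_right (by linarith)]; ring
    · linarith
    · intro x _ _
      rw [min_eq_left (by linarith), max_eq_left (by linarith)]; ring
    · linarith
    · intro x _ _
      rw [min_eq_right (by linarith), max_eq_left (by linarith)]; ring
  · intro x hx
    have := hx.1
    have := hx.2
    rw [sub_nonneg]
    apply le_min <;> apply max_le <;> linarith
  · intro x hx
    apply vol_sandwich
    · intro z hz
      have hz1 := max_lt_iff.1 hz.1
      have hz2 := lt_min_iff.1 hz.2
      exact ⟨h1 hx, h1 ⟨hz1.1, hz2.1⟩, abs_lt.2 ⟨by dsimp only; linarith, by dsimp only; linarith⟩⟩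
    · rintro z ⟨_, hz, hz3⟩
      have := h2 hz
      have h4 := abs_lt.1 hz3
      dsimp only at h4
      exact ⟨max_le this.1 (by linarith), le_min this.2 (by linarith)⟩
  · intro x hx
    ext z
    simp only [Set.mem_preimage, Set.mem_ofPred_eq, Set.mem_empty_iff_false, iff_false]
    exact fun h => hx (h2 h.1)
  · exact meas_and (measurable_fst hJ) (meas_and (measurable_snd hJ)
      (measurableSet_lt (by fun_prop) (by fun_prop)))

lemma area_gt (r a b : ℝ) (J : Set ℝ) (hJ : MeasurableSet J) (h1 : Set.Ioo a b ⊆ J)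
    (h2 : J ⊆ Set.Icc a b) (hr0 : 0 < r) (hr : r ≤ b - a) (hr2 : b - a ≤ 2 * r) :
    volume {p : ℝ × ℝ | p.1 ∈ J ∧ p.2 ∈ J ∧ |p.1 - p.2| > r}
      = ENNReal.ofReal ((b - a - r) ^ 2) := by
  have hc : Continuous (fun y : ℝ => max 0 (b - r - y) + max 0 (y - r - a)) := by fun_prop
  rw [vol_slices _ _ a b (by linarith) (fun y => max 0 (b - r - y) + max 0 (y - r - a)) hc]
  · congr 1
    rw [int_split _ hc a (b - r) (a + r) b, int_quad_congr _ a (b-r) 0 (-1) (b-r),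
      int_quad_congr _ (b-r) (a+r) 0 0 0, int_quad_congr _ (a+r) b 0 1 (-r-a)]
    · ring
    · linarith
    · intro x _ _
      rw [max_eq_left (by linarith), max_eq_right (by linarith)]; ring
    · linarith
    · intro x _ _
      rw [max_eq_left (by linarith), max_eq_left (by linarith)]; ring
    · linarith
    · intro x _ _
      rw [max_eq_right (by linarith), max_eq_left (by linarith)]; ring
  · intro x hx
    positivity
  · intro x hx
    obtain ⟨hx1, hx2⟩ := id hx
    rcases lt_or_ge x (b - r) with hlt | hge
    · rw [max_eq_right (by linarith), max_eq_left (by linarith), 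
        show b - r - x + 0 = b - (x + r) by ring]
      apply vol_sandwich
      · rintro z ⟨hz1, hz2⟩
        exact ⟨h1 hx, h1 ⟨by linarith, hz2⟩, lt_abs.2 (Or.inr (by dsimp only; linarith))⟩
      · rintro z ⟨_, hz, hz3⟩
        have := h2 hz
        have h4 := lt_abs.1 hz3
        dsimp only at h4
        refine ⟨?_, this.2⟩
        rcases h4 with h4 | h4 <;> linarith [this.1]
    rcases lt_or_ge (a + r) x with hlt' | hge'
    · rw [max_eq_left (by linarith), max_eq_right (by linarith), 
        show 0 + (x - r - a) = (x - r) - a by ring]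
      apply vol_sandwich
      · rintro z ⟨hz1, hz2⟩
        exact ⟨h1 hx, h1 ⟨hz1, by linarith⟩, lt_abs.2 (Or.inl (by dsimp only; linarith))⟩
      · rintro z ⟨_, hz, hz3⟩
        have := h2 hz
        have h4 := lt_abs.1 hz3
        dsimp only at h4
        refine ⟨this.1, ?_⟩
        rcases h4 with h4 | h4 <;> linarith [this.2]
    · rw [max_eq_left (by linarith), max_eq_left (by linarith)]
      have : Prod.mk x ⁻¹' {p : ℝ × ℝ | p.1 ∈ J ∧ p.2 ∈ J ∧ |p.1 - p.2| > r} = ∅ := by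
        rw [Set.eq_empty_iff_forall_notMem]
        rintro z ⟨_, hz, hz3⟩
        have := h2 hz
        have h4 := lt_abs.1 hz3
        dsimp only at h4
        rcases h4 with h4 | h4 <;> linarith [this.1, this.2]
      rw [this]; simp
  · intro x hx
    ext z
    simp only [Set.mem_preimage, Set.mem_ofPred_eq, Set.mem_empty_iff_false, iff_false]
    exact fun h => hx (h2 h.1)
  · exact meas_and (measurable_fst hJ) (meas_and (measurable_snd hJ)
      (measurableSet_lt (by fun_prop) (by fun_prop)))

lemma vol_rot (S : Set (ℝ × ℝ × ℝ)) (hS : MeasurableSet S) :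
    volume S = volume {q : ℝ × ℝ × ℝ | (q.2.1, q.2.2, q.1) ∈ S} := by
  have h1 : MeasurePreserving (Prod.swap : ℝ × (ℝ × ℝ) → (ℝ × ℝ) × ℝ) volume volume :=
    Measure.measurePreserving_swap (μ := (volume : Measure ℝ)) (ν := (volume : Measure (ℝ × ℝ)))
  have h2 : MeasurePreserving (MeasurableEquiv.prodAssoc : (ℝ × ℝ) × ℝ ≃ᵐ ℝ × ℝ × ℝ)
    volume volume := volume_preserving_prodAssoc
  exact ((h2.comp h1).measure_preimage hS.nullMeasurableSet).symm

lemma cube_meas : MeasurableSet unitCube3 :=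
  measurableSet_Icc.prod (measurableSet_Icc.prod measurableSet_Icc)

lemma J_facts (r x : ℝ) :
    MeasurableSet {y : ℝ | y ∈ Set.Icc (0:ℝ) 1 ∧ |x - y| < r} ∧
    Set.Ioo (max 0 (x - r)) (min 1 (x + r)) ⊆ {y : ℝ | y ∈ Set.Icc (0:ℝ) 1 ∧ |x - y| < r} ∧
    {y : ℝ | y ∈ Set.Icc (0:ℝ) 1 ∧ |x - y| < r} ⊆
      Set.Icc (max 0 (x - r)) (min 1 (x + r)) := by
  refine ⟨meas_and measurableSet_Icc (measurableSet_lt (by fun_prop) (by fun_prop)), ?_, ?_⟩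
  · intro z hz
    have hz1 := max_lt_iff.1 hz.1
    have hz2 := lt_min_iff.1 hz.2
    exact ⟨⟨hz1.1.le, hz2.1.le⟩, abs_lt.2 ⟨by linarith, by linarith⟩⟩
  · rintro z ⟨hz, hz3⟩
    have h4 := abs_lt.1 hz3
    exact ⟨max_le hz.1 (by linarith), le_min hz.2 (by linarith)⟩

lemma L_facts (r x : ℝ) (h12 : 1/2 < r) (h1 : r < 1) (hx : x ∈ Set.Ioo (0:ℝ) 1) :
    r ≤ min 1 (x + r) - max 0 (x - r) ∧ min 1 (x + r) - max 0 (x - r) ≤ 2 * r := by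
  obtain ⟨hx0, hx1⟩ := hx
  constructor
  · rcases le_total 1 (x + r) with h | h <;> rcases le_total 0 (x - r) with h' | h' <;>
      simp only [h, h', min_eq_left, min_eq_right, max_eq_left, max_eq_right] <;> linarith
  · linarith [min_le_right 1 (x + r), le_max_right 0 (x - r)]

lemma part1 (r : ℝ) (h12 : 1/2 < r) (h1 : r < 1) :
    volume {p : ℝ × ℝ × ℝ | p ∈ unitCube3 ∧
        |p.1 - p.2.1| < r ∧ |p.1 - p.2.2| < r ∧ |p.2.1 - p.2.2| < r}
      = ENNReal.ofReal (3 * r ^ 2 - 2 * r ^ 3) := by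
  have hc : Continuous (fun x : ℝ => 2 * r * (min 1 (x + r) - max 0 (x - r)) - r ^ 2) := by
    fun_prop
  rw [vol_slices _ _ 0 1 zero_le_one _ hc]
  · congr 1
    rw [int_split _ hc 0 (1 - r) r 1, int_quad_congr _ 0 (1-r) 0 (2*r) (r^2),
      int_quad_congr _ (1-r) r 0 0 (2*r-r^2), int_quad_congr _ r 1 0 (-(2*r)) (2*r*(1+r)-r^2)]
    · ring
    · linarith
    · intro x _ _
      rw [min_eq_left (by linarith), max_eq_right (by linarith)]; ring
    · linarith
    · intro x _ _
      rw [min_eq_left (by linarith), max_eq_left (by linarith)]; ring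
    · linarith
    · intro x _ _
      rw [min_eq_right (by linarith), max_eq_left (by linarith)]; ring
  · intro x hx
    have := (L_facts r x h12 h1 hx).1
    nlinarith
  · intro x hx
    obtain ⟨j1, j2, j3⟩ := J_facts r x
    obtain ⟨l1, l2⟩ := L_facts r x h12 h1 hx
    rw [← area_lt r _ _ _ j1 j2 j3 l1 l2]
    congr 1
    ext ⟨y, z⟩
    have := hx.1.le
    have := hx.2.le
    simp only [unitCube3, Set.mem_preimage, Set.mem_ofPred_eq, Set.mem_prod, Set.mem_Icc]
    tauto
  · intro x hx
    rw [Set.eq_empty_iff_forall_notMem]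
    exact fun z h => hx h.1.1
  · exact meas_and cube_meas (meas_and (measurableSet_lt (by fun_prop) (by fun_prop))
      (meas_and (measurableSet_lt (by fun_prop) (by fun_prop))
      (measurableSet_lt (by fun_prop) (by fun_prop))))

lemma part2 (r : ℝ) (h12 : 1/2 < r) (h1 : r < 1) :
    volume {p : ℝ × ℝ × ℝ | p ∈ unitCube3 ∧
        |p.1 - p.2.1| < r ∧ |p.1 - p.2.2| < r ∧ |p.2.1 - p.2.2| > r}
      = ENNReal.ofReal ((4/3) * r ^ 3 - (1/3) * (3 * r - 1) ^ 2) := by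
  have hc : Continuous (fun x : ℝ => (min 1 (x + r) - max 0 (x - r) - r) ^ 2) := by
    fun_prop
  rw [vol_slices _ _ 0 1 zero_le_one _ hc]
  · congr 1
    rw [int_split _ hc 0 (1 - r) r 1, int_quad_congr _ 0 (1-r) 1 0 0,
      int_quad_congr _ (1-r) r 0 0 ((1-r)^2), int_quad_congr _ r 1 1 (-2) 1]
    · ring
    · linarith
    · intro x _ _
      rw [min_eq_left (by linarith), max_eq_right (by linarith)]; ring
    · linarith
    · intro x _ _
      rw [min_eq_left (by linarith), max_eq_left (by linarith)]; ring
    · linarith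
    · intro x _ _
      rw [min_eq_right (by linarith), max_eq_left (by linarith)]; ring
  · intro x hx
    positivity
  · intro x hx
    obtain ⟨j1, j2, j3⟩ := J_facts r x
    obtain ⟨l1, l2⟩ := L_facts r x h12 h1 hx
    rw [← area_gt r _ _ _ j1 j2 j3 (by linarith) l1 l2]
    congr 1
    ext ⟨y, z⟩
    have := hx.1.le
    have := hx.2.le
    simp only [unitCube3, Set.mem_preimage, Set.mem_ofPred_eq, Set.mem_prod, Set.mem_Icc]
    tauto
  · intro x hx
    rw [Set.eq_empty_iff_forall_notMem]
    exact fun z h => hx h.1.1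
  · exact meas_and cube_meas (meas_and (measurableSet_lt (by fun_prop) (by fun_prop))
      (meas_and (measurableSet_lt (by fun_prop) (by fun_prop))
      (measurableSet_lt (by fun_prop) (by fun_prop))))

lemma part3 (r : ℝ) (h12 : 1/2 < r) (h1 : r < 1) :
    volume {p : ℝ × ℝ × ℝ | p ∈ unitCube3 ∧
        |p.1 - p.2.1| < r ∧ |p.1 - p.2.2| > r ∧ |p.2.1 - p.2.2| > r}
      = ENNReal.ofReal ((2/3) * (1 - r) ^ 3) := by
  have hm : MeasurableSet {p : ℝ × ℝ × ℝ | p ∈ unitCube3 ∧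
        |p.1 - p.2.1| < r ∧ |p.1 - p.2.2| > r ∧ |p.2.1 - p.2.2| > r} :=
    meas_and cube_meas (meas_and (measurableSet_lt (by fun_prop) (by fun_prop))
      (meas_and (measurableSet_lt (by fun_prop) (by fun_prop))
      (measurableSet_lt (by fun_prop) (by fun_prop))))
  have hc : Continuous (fun x : ℝ => (max 0 (x - r)) ^ 2 + (max 0 (1 - r - x)) ^ 2) := by
    fun_prop
  rw [vol_rot _ hm, vol_slices _ _ 0 1 zero_le_one _ hc]
  · congr 1
    rw [int_split _ hc 0 (1 - r) r 1, int_quad_congr _ 0 (1-r) 1 (-2*(1-r)) ((1-r)^2),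
      int_quad_congr _ (1-r) r 0 0 0, int_quad_congr _ r 1 1 (-2*r) (r^2)]
    · ring
    · linarith
    · intro x _ _
      rw [max_eq_right (by linarith), max_eq_left (by linarith)]; ring
    · linarith
    · intro x _ _
      rw [max_eq_left (by linarith), max_eq_left (by linarith)]; ring
    · linarith
    · intro x _ _
      rw [max_eq_left (by linarith), max_eq_right (by linarith)]; ring
  · intro x hx
    positivity
  · intro z hz
    obtain ⟨hz0, hz1⟩ := hz
    have key : ∀ I : Set ℝ, (∀ x, x ∈ I ↔ (0 ≤ x ∧ x ≤ 1) ∧ r < |x - z|) →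
        (∀ x ∈ I, ∀ y ∈ I, |x - y| < r) →
        volume (Prod.mk z ⁻¹' {q : ℝ × ℝ × ℝ | (q.2.1, q.2.2, q.1) ∈
          {p : ℝ × ℝ × ℝ | p ∈ unitCube3 ∧
            |p.1 - p.2.1| < r ∧ |p.1 - p.2.2| > r ∧ |p.2.1 - p.2.2| > r}})
          = volume I * volume I := by
      intro I hI hI2
      rw [← Measure.prod_prod, ← Measure.volume_eq_prod]
      congr 1
      ext ⟨x, y⟩
      have h5 := fun hx hy => hI2 x hx y hy
      have := hz0.le
      have := hz1.le
      simp only [unitCube3, Set.mem_preimage, Set.mem_ofPred_eq, Set.mem_prod, Set.mem_Icc, hI,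
        gt_iff_lt] at h5 ⊢
      tauto
    rcases lt_or_ge r z with h | h
    · rw [key (Set.Ico 0 (z - r)), Real.volume_Ico, max_eq_right (by linarith),
        max_eq_left (by linarith), ← ENNReal.ofReal_mul (by linarith)]
      · congr 1; ring
      · intro x
        rw [lt_abs, Set.mem_Ico]
        constructor
        · rintro ⟨h1, h2⟩
          exact ⟨⟨h1, by linarith⟩, Or.inr (by linarith)⟩
        · rintro ⟨⟨h1, h2⟩, h3 | h3⟩
          · exfalso; linarith
          · exact ⟨h1, by linarith⟩
      · rintro x ⟨hx, hx'⟩ y ⟨hy, hy'⟩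
        exact abs_lt.2 ⟨by linarith, by linarith⟩
    rcases lt_or_ge z (1 - r) with h' | h'
    · rw [key (Set.Ioc (z + r) 1), Real.volume_Ioc, max_eq_left (by linarith),
        max_eq_right (by linarith), ← ENNReal.ofReal_mul (by linarith)]
      · congr 1; ring
      · intro x
        rw [lt_abs, Set.mem_Ioc]
        constructor
        · rintro ⟨h1, h2⟩
          exact ⟨⟨by linarith, by linarith⟩, Or.inl (by linarith)⟩
        · rintro ⟨⟨h1, h2⟩, h3 | h3⟩
          · exact ⟨by linarith, h2⟩
          · exfalso; linarith
      · rintro x ⟨hx, hx'⟩ y ⟨hy, hy'⟩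
        exact abs_lt.2 ⟨by linarith, by linarith⟩
    · rw [key ∅, max_eq_left (by linarith), max_eq_left (by linarith)]
      · simp
      · intro x
        rw [lt_abs]
        constructor
        · intro h; exact h.elim
        · rintro ⟨⟨h1, h2⟩, h3 | h3⟩ <;> exfalso <;> linarith
      · intro x hx; exact hx.elim
  · intro x hx
    rw [Set.eq_empty_iff_forall_notMem]
    exact fun z h => hx h.1.2.2
  · exact hm.preimage (by fun_prop)

theorem stmt_3 (r₀ : ℝ) (h12 : 1/2 < r₀) (h1 : r₀ < 1) :
    (volume {p : ℝ × ℝ × ℝ | p ∈ unitCube3 ∧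
        |p.1 - p.2.1| < r₀ ∧ |p.1 - p.2.2| < r₀ ∧ |p.2.1 - p.2.2| < r₀}
      = ENNReal.ofReal (3 * r₀ ^ 2 - 2 * r₀ ^ 3)) ∧
    (volume {p : ℝ × ℝ × ℝ | p ∈ unitCube3 ∧
        |p.1 - p.2.1| < r₀ ∧ |p.1 - p.2.2| < r₀ ∧ |p.2.1 - p.2.2| > r₀}
      = ENNReal.ofReal ((4/3) * r₀ ^ 3 - (1/3) * (3 * r₀ - 1) ^ 2)) ∧
    (volume {p : ℝ × ℝ × ℝ | p ∈ unitCube3 ∧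
        |p.1 - p.2.1| < r₀ ∧ |p.1 - p.2.2| > r₀ ∧ |p.2.1 - p.2.2| > r₀}
      = ENNReal.ofReal ((2/3) * (1 - r₀) ^ 3)) ∧
    (volume {p : ℝ × ℝ × ℝ | p ∈ unitCube3 ∧
        |p.1 - p.2.1| > r₀ ∧ |p.1 - p.2.2| > r₀ ∧ |p.2.1 - p.2.2| > r₀}
      = 0) := by
  refine ⟨part1 r₀ h12 h1, part2 r₀ h12 h1, part3 r₀ h12 h1, ?_⟩
  convert measure_empty (μ := (volume : Measure (ℝ × ℝ × ℝ)))
  rw [Set.eq_empty_iff_forall_notMem]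
  rintro ⟨x, y, z⟩ ⟨⟨hx, hy, hz⟩, a, b, c⟩
  simp only [Set.mem_Icc, gt_iff_lt, lt_abs] at *
  obtain ⟨_, _⟩ := hx
  obtain ⟨_, _⟩ := hy
  obtain ⟨_, _⟩ := hz
  rcases a with a | a <;> rcases b with b | b <;> rcases c with c | c <;> linarith
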